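/- There are absolute constants c₀ > 0 and c₁ > 0 with the following property. Let A be an n×n real positive semidefinite matrix and N an n×n real matrix such that ‖N‖_F² ≤ η ‖A‖_F² for some 0 < η ≤ 1 and ‖N_{·,j}‖₂² ≤ ‖A_{·,j}‖₂² for every j; assume (A+N)_{jj} > 0 for all j, and set p_j = q_j = (A+N)_{jj}/tr(A+N) and φ = max_j A_{jj}/(A+N)_{jj}. Let 0 < ε < 1, let k ≥ 1 be an integer, and let t be an integer with t ≥ c₀ · φ · √n · k² · log²(n) / ε². Sample indices j₁,…,j_t i.i.d. from q and, independently, indices i₁,…,i_t i.i.d. from p; form the n×t matrix C with l-th column (A+N)_{·,j_l}/√(t·q_{j_l}) and the t×t matrix R whose l-th row is C_{i_l,·}/√(t·p_{i_l}). Then with probability at least 2/3 over both samplings, simultaneously for every t×t orthogonal projection X of rank at most k: | ‖R − R X‖_F² − ‖C − C X‖_F² | ≤ c₁ · (ε + √η) · ‖A‖_F². -/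

import Mathlib

open Matrix

noncomputable def frobeniusSq {m n : ℕ} (M : Matrix (Fin m) (Fin n) ℝ) : ℝ :=
  ∑ i, ∑ j, (M i j)^2

/-- The n×t column-sampling-and-rescaling matrix: its l-th column is
(1/√(t·q(jv l))) times the standard basis vector e_{jv l}. -/
noncomputable def colSample {n : ℕ} (t : ℕ) (q : Fin n → ℝ) (jv : Fin t → Fin n) :
    Matrix (Fin n) (Fin t) ℝ :=
  Matrix.of fun i l => if i = jv l then (Real.sqrt (t * q (jv l)))⁻¹ else 0

/-- Probability, under i.i.d. sampling of t indices with distribution q, of the event E. -/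
noncomputable def iidProb {n : ℕ} (t : ℕ) (q : Fin n → ℝ) (E : Set (Fin t → Fin n)) : ℝ :=
  ∑ jv : Fin t → Fin n, Set.indicator E (fun v => ∏ l, q (v l)) jv

/-- Probability, under two independent i.i.d. samples of t indices each (with
distributions q and p respectively), of the event E. -/
noncomputable def iidProb2 {n : ℕ} (t : ℕ) (q p : Fin n → ℝ)
    (E : Set ((Fin t → Fin n) × (Fin t → Fin n))) : ℝ :=
  ∑ w : (Fin t → Fin n) × (Fin t → Fin n),
    Set.indicator E (fun w => (∏ l, q (w.1 l)) * (∏ l, p (w.2 l))) w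

/-!
Because `‖M - M X‖_F² = tr (MᵀM) - tr (MᵀM X)` and `‖X‖_F² = rank X`, two projection costs of rank
at most `k` differ by at most `|tr G| + √k ‖G‖_F`, where `G` is the difference of the two Gram
matrices; this bound no longer depends on the projection. The noise `N` is split off first by
`2xy ≤ s x² + y² / s` with `s = √η`, so `G` only involves the sketches of `A`. For positive
semidefinite `A` one has `Aᵢⱼ² ≤ Aᵢᵢ Aⱼⱼ` and `‖Aᵢ‖² ≤ Aᵢᵢ ‖A‖_F`, so diagonal sampling controls
the second moments of `tr G` and `‖G‖_F` over both samplings. A single application of Markov's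
inequality to the whole error bound finishes the proof. For `n = 1` sampling is exact, which makes
up for `log n = 0`.
-/

section Expectation

variable {ι κ : Type*} [Fintype ι] [DecidableEq ι] [Fintype κ] {q : κ → ℝ}

/-- The expectation of `F v` when the coordinates of `v` are drawn independently with
weights `q`. -/
noncomputable def iidExp (q : κ → ℝ) (F : (ι → κ) → ℝ) : ℝ :=
  ∑ v, (∏ i, q (v i)) * F v

lemma iidExp_add (F G : (ι → κ) → ℝ) :
    iidExp q (fun v => F v + G v) = iidExp q F + iidExp q G := by
  simp only [iidExp, mul_add, Finset.sum_add_distrib]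

lemma iidExp_const_mul (c : ℝ) (F : (ι → κ) → ℝ) :
    iidExp q (fun v => c * F v) = c * iidExp q F := by
  simp only [iidExp, Finset.mul_sum, mul_left_comm]

lemma iidExp_sum {α : Type*} (s : Finset α) (F : α → (ι → κ) → ℝ) :
    iidExp q (fun v => ∑ a ∈ s, F a v) = ∑ a ∈ s, iidExp q (F a) := by
  simp only [iidExp, Finset.mul_sum]
  exact Finset.sum_comm

lemma iidExp_mono (hq : ∀ j, 0 ≤ q j) {F G : (ι → κ) → ℝ} (h : ∀ v, F v ≤ G v) :
    iidExp q F ≤ iidExp q G :=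
  Finset.sum_le_sum fun v _ =>
    mul_le_mul_of_nonneg_left (h v) (Finset.prod_nonneg fun _ _ => hq _)

lemma iidExp_prod (G : ι → κ → ℝ) :
    iidExp q (fun v => ∏ i, G i (v i)) = ∏ i, ∑ j, q j * G i j := by
  simp only [iidExp, ← Finset.prod_mul_distrib]
  rw [Finset.prod_univ_sum, Fintype.piFinset_univ]

lemma iidExp_const (hq : ∑ j, q j = 1) (c : ℝ) :
    iidExp q (fun _ : ι → κ => c) = c := by
  have h := iidExp_prod (q := q) (fun (_ : ι) _ => 1)
  simp only [iidExp, mul_one, Finset.prod_const_one, hq] at h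
  rw [iidExp, ← Finset.sum_mul, h, one_mul]

lemma iidExp_eval (hq : ∑ j, q j = 1) (g : κ → ℝ) (l : ι) :
    iidExp q (fun v => g (v l)) = ∑ j, q j * g j := by
  have h := iidExp_prod (q := q) (fun i j => if i = l then g j else 1)
  rw [Finset.prod_eq_single l (fun i _ hi => by simp [hi, hq]) (by simp)] at h
  simpa using h

lemma iidExp_eval_mul_eval (hq : ∑ j, q j = 1) (g h : κ → ℝ) {l m : ι} (hlm : l ≠ m) :
    iidExp q (fun v => g (v l) * h (v m)) = (∑ j, q j * g j) * ∑ j, q j * h j := by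
  have key := iidExp_prod (q := q)
    (fun i j => (if i = l then g j else 1) * (if i = m then h j else 1))
  rw [← Finset.prod_subset (Finset.subset_univ {l, m}), Finset.prod_pair hlm] at key
  · simp only [Finset.prod_mul_distrib, Finset.prod_ite_eq', Finset.mem_univ, if_true] at key
    simpa [hlm, hlm.symm] using key
  · intro i _ hi
    simp only [Finset.mem_insert, Finset.mem_singleton, not_or] at hi
    simp [hi.1, hi.2, hq]

lemma iidExp_sum_eval_sq (hq : ∑ j, q j = 1) {g : κ → ℝ} (hg : ∑ j, q j * g j = 0) :
    iidExp q (fun v : ι → κ => (∑ l, g (v l)) ^ 2) = Fintype.card ι * ∑ j, q j * g j ^ 2 := by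
  have row (l : ι) : iidExp q (fun v => ∑ m, g (v l) * g (v m)) = ∑ j, q j * g j ^ 2 := by
    rw [iidExp_sum, Finset.sum_eq_single l]
    · simpa only [← sq] using iidExp_eval hq (fun j => g j ^ 2) l
    · intro m _ hm
      rw [iidExp_eval_mul_eval hq g g hm.symm, hg, zero_mul]
    · simp
  simp only [sq (Finset.sum _ _), Finset.sum_mul_sum]
  rw [iidExp_sum, Finset.sum_congr rfl fun l _ => row l]
  simp

end Expectation

section Estimator

variable {κ : Type*} {q : κ → ℝ} {t : ℕ}

/-- The Hansen–Hurwitz estimator of the population total `∑ j, f j` from the sample `v`, each drawn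
value being weighted by the inverse of its expected number of occurrences. -/
noncomputable def hansenHurwitz (q f : κ → ℝ) (v : Fin t → κ) : ℝ :=
  ∑ l, f (v l) / (t * q (v l))

variable [Fintype κ]

/-- Sampling weights: a probability distribution on a finite type that charges every point, so
that rescaling by `1 / q j` never divides by zero. -/
structure IsSamplingDist (q : κ → ℝ) : Prop where
  pos : ∀ j, 0 < q j
  sum_eq_one : ∑ j, q j = 1

lemma iidExp_hansenHurwitz (hq : IsSamplingDist q) (ht : 0 < t) (f : κ → ℝ) :
    iidExp q (hansenHurwitz (t := t) q f) = ∑ j, f j := by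
  have ht' : (t : ℝ) ≠ 0 := by positivity
  have draw (l : Fin t) : iidExp q (fun v => f (v l) / (t * q (v l))) = (∑ j, f j) / t := by
    rw [iidExp_eval hq.sum_eq_one (fun j => f j / (t * q j)), Finset.sum_div]
    refine Finset.sum_congr rfl fun j _ => ?_
    have := (hq.pos j).ne'
    field_simp
  calc iidExp q (hansenHurwitz (t := t) q f)
      = ∑ l : Fin t, iidExp q (fun v => f (v l) / (t * q (v l))) := iidExp_sum _ _
    _ = ∑ j, f j := by simp [draw, mul_div_cancel₀ _ ht']

lemma iidExp_hansenHurwitz_sub_sq (hq : IsSamplingDist q) (ht : 0 < t) (f : κ → ℝ) :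
    iidExp q (fun v : Fin t → κ => (hansenHurwitz q f v - ∑ j, f j) ^ 2) =
      (∑ j, f j ^ 2 / q j - (∑ j, f j) ^ 2) / t := by
  have ht' : (t : ℝ) ≠ 0 := by positivity
  set μ := ∑ j, f j with hμ
  have centred (v : Fin t → κ) :
      hansenHurwitz q f v - μ = ∑ l, (f (v l) / (t * q (v l)) - μ / t) := by
    simp [hansenHurwitz, Finset.sum_sub_distrib, mul_div_cancel₀ _ ht']
  have mean_zero : ∑ j, q j * (f j / (t * q j) - μ / t) = 0 := by
    have term (j : κ) : q j * (f j / (t * q j) - μ / t) = f j / t - q j * (μ / t) := by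
      have := (hq.pos j).ne'
      field_simp
    simp only [term, Finset.sum_sub_distrib, ← Finset.sum_mul, ← Finset.sum_div, hq.sum_eq_one,
      ← hμ, one_mul, sub_self]
  have term (j : κ) : q j * (f j / (t * q j) - μ / t) ^ 2 =
      (f j ^ 2 / q j - 2 * μ * f j + q j * μ ^ 2) / t ^ 2 := by
    have := (hq.pos j).ne'
    field_simp
    ring
  simp only [centred]
  rw [iidExp_sum_eval_sq (g := fun j => f j / (t * q j) - μ / t) hq.sum_eq_one mean_zero]
  simp only [term, ← Finset.sum_div, Finset.sum_add_distrib, Finset.sum_sub_distrib,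
    ← Finset.mul_sum, ← Finset.sum_mul, hq.sum_eq_one, ← hμ, Fintype.card_fin]
  field_simp
  ring

lemma iidExp_hansenHurwitz_sub_sq_le (hq : IsSamplingDist q) (ht : 0 < t) (f : κ → ℝ) :
    iidExp q (fun v : Fin t → κ => (hansenHurwitz q f v - ∑ j, f j) ^ 2) ≤
      (∑ j, f j ^ 2 / q j) / t := by
  rw [iidExp_hansenHurwitz_sub_sq hq ht]
  gcongr
  exact sub_le_self _ (sq_nonneg _)

lemma iidExp_hansenHurwitz_sq_le (hq : IsSamplingDist q) (ht : 0 < t) (f : κ → ℝ) :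
    iidExp q (fun v : Fin t → κ => hansenHurwitz q f v ^ 2) ≤
      (∑ j, f j) ^ 2 + (∑ j, f j ^ 2 / q j) / t := by
  set μ := ∑ j, f j with hμ
  have expand (v : Fin t → κ) : hansenHurwitz q f v ^ 2 =
      (hansenHurwitz q f v - μ) ^ 2 + (2 * μ * hansenHurwitz q f v + -μ ^ 2) := by ring
  simp only [expand, iidExp_add, iidExp_const_mul, iidExp_const hq.sum_eq_one]
  rw [iidExp_hansenHurwitz hq ht, ← hμ]
  linarith [iidExp_hansenHurwitz_sub_sq_le hq ht f]

lemma hansenHurwitz_of_subsingleton [Subsingleton κ] (hq : IsSamplingDist q) (ht : 0 < t)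
    (f : κ → ℝ) (v : Fin t → κ) : hansenHurwitz q f v = ∑ j, f j := by
  let j₀ : κ := v ⟨0, ht⟩
  have hv (l : Fin t) : v l = j₀ := Subsingleton.elim _ _
  have hq₀ : q j₀ = 1 := by rw [← hq.sum_eq_one, Fintype.sum_subsingleton _ j₀]
  have ht' : (t : ℝ) ≠ 0 := by positivity
  simp [hansenHurwitz, hv, hq₀, Fintype.sum_subsingleton _ j₀, mul_div_cancel₀ _ ht']

end Estimator

lemma one_sub_div_le_iidProb2 {n t : ℕ} {q p : Fin n → ℝ} (hq : IsSamplingDist q)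
    (hp : IsSamplingDist p) {W : (Fin t → Fin n) → (Fin t → Fin n) → ℝ} (hW : ∀ v u, 0 ≤ W v u)
    {a b : ℝ} (ha : 0 < a) (hb : iidExp q (fun v => iidExp p (W v)) ≤ b)
    {E : Set ((Fin t → Fin n) × (Fin t → Fin n))} (hE : ∀ v u, W v u ≤ a → (v, u) ∈ E) :
    1 - b / a ≤ iidProb2 t q p E := by
  have weight_nonneg (w : (Fin t → Fin n) × (Fin t → Fin n)) :
      0 ≤ (∏ l, q (w.1 l)) * ∏ l, p (w.2 l) :=
    mul_nonneg (Finset.prod_nonneg fun _ _ => (hq.pos _).le)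
      (Finset.prod_nonneg fun _ _ => (hp.pos _).le)
  have expected : iidExp q (fun v => iidExp p (fun u => 1 + -a⁻¹ * W v u)) ≤ iidProb2 t q p E := by
    simp only [iidProb2, iidExp, Finset.mul_sum, ← mul_assoc]
    rw [Fintype.sum_prod_type]
    refine Finset.sum_le_sum fun v _ => Finset.sum_le_sum fun u _ => ?_
    by_cases hmem : (v, u) ∈ E
    · rw [Set.indicator_of_mem hmem]
      have := mul_nonneg (inv_pos.2 ha).le (hW v u)
      exact mul_le_of_le_one_right (weight_nonneg (v, u)) (by linarith)
    · rw [Set.indicator_of_notMem hmem]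
      have hlt : a < W v u := not_le.1 fun hle => hmem (hE v u hle)
      have : 1 ≤ a⁻¹ * W v u := (le_inv_mul_iff₀ ha).2 (by linarith)
      exact mul_nonpos_of_nonneg_of_nonpos (weight_nonneg (v, u)) (by linarith)
  simp only [iidExp_add, iidExp_const_mul, iidExp_const hq.sum_eq_one,
    iidExp_const hp.sum_eq_one] at expected
  have := mul_le_mul_of_nonneg_left hb (inv_pos.2 ha).le
  rw [div_eq_inv_mul]
  linarith

section FrobeniusSq

variable {m n : ℕ}

lemma frobeniusSq_nonneg (M : Matrix (Fin m) (Fin n) ℝ) : 0 ≤ frobeniusSq M := by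
  unfold frobeniusSq
  positivity

lemma frobeniusSq_eq_sum_prod (M : Matrix (Fin m) (Fin n) ℝ) :
    frobeniusSq M = ∑ z : Fin m × Fin n, M z.1 z.2 ^ 2 :=
  Fintype.sum_prod_type' (fun i j => M i j ^ 2) |>.symm

lemma frobeniusSq_eq_trace (M : Matrix (Fin m) (Fin n) ℝ) :
    frobeniusSq M = (Mᵀ * M).trace := by
  simp only [frobeniusSq, trace, diag, mul_apply, transpose_apply, ← sq]
  exact Finset.sum_comm

lemma sq_trace_le (M : Matrix (Fin n) (Fin n) ℝ) : M.trace ^ 2 ≤ n * frobeniusSq M := by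
  have diag_le : ∑ i, M i i ^ 2 ≤ frobeniusSq M :=
    Finset.sum_le_sum fun i _ => Finset.single_le_sum (f := fun j => M i j ^ 2)
      (fun _ _ => sq_nonneg _) (Finset.mem_univ i)
  calc M.trace ^ 2 ≤ n * ∑ i, M i i ^ 2 := by
        simpa [trace] using sq_sum_le_card_mul_sum_sq (s := Finset.univ) (f := fun i => M i i)
    _ ≤ n * frobeniusSq M := by gcongr

lemma sq_trace_mul_le (M : Matrix (Fin m) (Fin n) ℝ) (L : Matrix (Fin n) (Fin m) ℝ) :
    (M * L).trace ^ 2 ≤ frobeniusSq M * frobeniusSq Lᵀ := by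
  have trace_eq : (M * L).trace = ∑ z : Fin m × Fin n, M z.1 z.2 * Lᵀ z.1 z.2 := by
    simp [trace, mul_apply, Fintype.sum_prod_type]
  rw [trace_eq, frobeniusSq_eq_sum_prod, frobeniusSq_eq_sum_prod]
  exact Finset.sum_mul_sq_le_sq_mul_sq _ _ _

lemma dotProduct_mulVec_le (M : Matrix (Fin n) (Fin n) ℝ) (y : Fin n → ℝ) :
    y ⬝ᵥ M *ᵥ y ≤ √(frobeniusSq M) * ∑ i, y i ^ 2 := by
  have quad_eq : y ⬝ᵥ M *ᵥ y = (M * vecMulVec y y).trace := by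
    rw [mul_vecMulVec, trace_vecMulVec, dotProduct_comm]
  have frobeniusSq_eq : frobeniusSq (vecMulVec y y)ᵀ = (∑ i, y i ^ 2) ^ 2 := by
    rw [transpose_vecMulVec, sq (∑ i, y i ^ 2), Finset.sum_mul_sum]
    simp only [frobeniusSq, vecMulVec_apply, mul_pow]
  refine le_of_sq_le_sq ?_ (by positivity)
  rw [mul_pow, Real.sq_sqrt (frobeniusSq_nonneg M), quad_eq, ← frobeniusSq_eq]
  exact sq_trace_mul_le M (vecMulVec y y)

lemma abs_frobeniusSq_add_sub_le (M E : Matrix (Fin m) (Fin n) ℝ) {s : ℝ} (hs : 0 < s) :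
    |frobeniusSq (M + E) - frobeniusSq M| ≤ s * frobeniusSq M + (1 + s⁻¹) * frobeniusSq E := by
  have entry (x y : ℝ) : |(x + y) ^ 2 - x ^ 2| ≤ s * x ^ 2 + (1 + s⁻¹) * y ^ 2 := by
    have hsub : 0 ≤ s⁻¹ * (s * x - y) ^ 2 := by positivity
    have hadd : 0 ≤ s⁻¹ * (s * x + y) ^ 2 := by positivity
    have esub : s⁻¹ * (s * x - y) ^ 2 = s * x ^ 2 - 2 * x * y + s⁻¹ * y ^ 2 := by
      field_simp
      ring
    have eadd : s⁻¹ * (s * x + y) ^ 2 = s * x ^ 2 + 2 * x * y + s⁻¹ * y ^ 2 := by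
      field_simp
      ring
    rw [abs_le]
    constructor <;> nlinarith [sq_nonneg y]
  simp only [frobeniusSq_eq_sum_prod, Finset.mul_sum, ← Finset.sum_add_distrib,
    ← Finset.sum_sub_distrib]
  exact (Finset.abs_sum_le_sum_abs _ _).trans (Finset.sum_le_sum fun z _ => entry _ _)

lemma frobeniusSq_add_le_four_mul {M E : Matrix (Fin m) (Fin n) ℝ}
    (hEM : frobeniusSq E ≤ frobeniusSq M) : frobeniusSq (M + E) ≤ 4 * frobeniusSq M := by
  have := le_of_abs_le (abs_frobeniusSq_add_sub_le M E one_pos)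
  norm_num at this
  linarith

end FrobeniusSq

section PosSemidef

variable {n : ℕ} {A : Matrix (Fin n) (Fin n) ℝ}

lemma sq_dotProduct_mulVec_le_of_posSemidef (hA : A.PosSemidef) (x y : Fin n → ℝ) :
    (x ⬝ᵥ A *ᵥ y) ^ 2 ≤ (x ⬝ᵥ A *ᵥ x) * (y ⬝ᵥ A *ᵥ y) := by
  have hsymm : A.IsSymm := by simpa [IsHermitian, IsSymm] using hA.isHermitian
  simpa only [toBilin'_apply'] using LinearMap.BilinForm.apply_sq_le_of_symm A.toBilin'
    (fun z => by simpa only [toBilin'_apply', star_trivial] using hA.dotProduct_mulVec_nonneg z)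
    (LinearMap.BilinForm.isSymm_iff.1 (isSymm_toBilin'_iff_isSymm.2 hsymm)) x y

lemma sq_apply_le_of_posSemidef (hA : A.PosSemidef) (i j : Fin n) :
    A i j ^ 2 ≤ A i i * A j j := by
  simpa using sq_dotProduct_mulVec_le_of_posSemidef hA (Pi.single i 1) (Pi.single j 1)

-- Cauchy–Schwarz for the form of `A`, applied to the `i`-th basis vector and the `i`-th row.
lemma sum_sq_row_le_of_posSemidef (hA : A.PosSemidef) (i : Fin n) :
    ∑ j, A i j ^ 2 ≤ A i i * √(frobeniusSq A) := by
  set S := ∑ j, A i j ^ 2 with hS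
  have hS0 : 0 ≤ S := by positivity
  have hdiag : 0 ≤ A i i := hA.diag_nonneg
  have hrow : Pi.single i 1 ⬝ᵥ A *ᵥ A i = S := by
    rw [single_one_dotProduct]
    simp only [mulVec, dotProduct, ← sq, hS]
  have key : S * S ≤ A i i * √(frobeniusSq A) * S := calc
    S * S = (Pi.single i 1 ⬝ᵥ A *ᵥ A i) ^ 2 := by rw [hrow, sq]
    _ ≤ A i i * (A i ⬝ᵥ A *ᵥ A i) := by
      simpa using sq_dotProduct_mulVec_le_of_posSemidef hA (Pi.single i 1) (A i)
    _ ≤ A i i * (√(frobeniusSq A) * S) := by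
      gcongr
      exact dotProduct_mulVec_le A (A i)
    _ = A i i * √(frobeniusSq A) * S := by ring
  rcases hS0.eq_or_lt with h | h
  · rw [← h]
    positivity
  · exact le_of_mul_le_mul_right key h

lemma trace_pos_of_posSemidef (hA : A.PosSemidef) (hF : 0 < frobeniusSq A) : 0 < A.trace := by
  refine hA.trace_nonneg.lt_of_ne fun h => hF.ne ?_
  simp [hA.trace_eq_zero_iff.1 h.symm, frobeniusSq]

end PosSemidef

section Projection

variable {m m' t k : ℕ} {X : Matrix (Fin t) (Fin t) ℝ}

/-- The cost `‖M - M X‖_F²` of projecting the rows of `M` by `X`. -/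
noncomputable def projCost (M : Matrix (Fin m) (Fin t) ℝ) (X : Matrix (Fin t) (Fin t) ℝ) : ℝ :=
  frobeniusSq (M - M * X)

lemma trace_eq_rank_of_mul_self (hX : X * X = X) : X.trace = X.rank := by
  have hidem : IsIdempotentElem (toLin' X) := by
    rw [IsIdempotentElem, Module.End.mul_eq_comp, ← toLin'_mul, hX]
  rw [← trace_toLin'_eq, (LinearMap.IsIdempotentElem.isProj_range _ hidem).trace]
  rfl

lemma projCost_eq_trace_sub_trace (M : Matrix (Fin m) (Fin t) ℝ) (hXt : Xᵀ = X)
    (hX : X * X = X) : projCost M X = (Mᵀ * M).trace - (Mᵀ * M * X).trace := by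
  have expand : (M - M * X)ᵀ * (M - M * X) =
      Mᵀ * M - Mᵀ * M * X - X * (Mᵀ * M - Mᵀ * M * X) := by
    simp only [transpose_sub, transpose_mul, hXt, Matrix.sub_mul, Matrix.mul_sub, Matrix.mul_assoc]
    abel
  rw [projCost, frobeniusSq_eq_trace, expand, trace_sub, trace_sub, trace_mul_comm X,
    Matrix.sub_mul, Matrix.mul_assoc (Mᵀ * M) X X, hX, sub_self, trace_zero, sub_zero]

lemma projCost_le_frobeniusSq (M : Matrix (Fin m) (Fin t) ℝ) (hXt : Xᵀ = X) (hX : X * X = X) :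
    projCost M X ≤ frobeniusSq M := by
  have removed : (Mᵀ * M * X).trace = frobeniusSq (M * X) := by
    rw [frobeniusSq_eq_trace, transpose_mul, hXt, Matrix.mul_assoc X, trace_mul_comm X,
      ← Matrix.mul_assoc, Matrix.mul_assoc _ X X, hX]
  rw [projCost_eq_trace_sub_trace M hXt hX, ← frobeniusSq_eq_trace, removed]
  exact sub_le_self _ (frobeniusSq_nonneg _)

lemma abs_projCost_add_sub_le (M E : Matrix (Fin m) (Fin t) ℝ) (hXt : Xᵀ = X) (hX : X * X = X)
    {s : ℝ} (hs : 0 < s) :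
    |projCost (M + E) X - projCost M X| ≤ s * frobeniusSq M + (1 + s⁻¹) * frobeniusSq E := by
  have split : M + E - (M + E) * X = (M - M * X) + (E - E * X) := by
    rw [Matrix.add_mul]
    abel
  calc |projCost (M + E) X - projCost M X|
      ≤ s * projCost M X + (1 + s⁻¹) * projCost E X := by
        rw [projCost, projCost, split]
        exact abs_frobeniusSq_add_sub_le _ _ hs
    _ ≤ s * frobeniusSq M + (1 + s⁻¹) * frobeniusSq E := by
        gcongr <;> exact projCost_le_frobeniusSq _ hXt hX

lemma abs_le_inv_two_mul_mul_sq_add {r : ℝ} (hr : 0 < r) (x : ℝ) :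
    |x| ≤ (2 * r)⁻¹ * x ^ 2 + r / 2 := by
  have h : (2 * r)⁻¹ * x ^ 2 + r / 2 - |x| = (2 * r)⁻¹ * (|x| - r) ^ 2 := by
    rw [← sq_abs x]
    field_simp
    ring
  have : 0 ≤ (2 * r)⁻¹ * (|x| - r) ^ 2 := by positivity
  linarith

lemma abs_projCost_sub_projCost_le (R : Matrix (Fin m) (Fin t) ℝ) (C : Matrix (Fin m') (Fin t) ℝ)
    (hXt : Xᵀ = X) (hX : X * X = X) (hXk : X.rank ≤ k) {r : ℝ} (hr : 0 < r) :
    |projCost R X - projCost C X| ≤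
      (2 * r)⁻¹ * ((Rᵀ * R - Cᵀ * C).trace ^ 2 + k * frobeniusSq (Rᵀ * R - Cᵀ * C)) + r := by
  set G := Rᵀ * R - Cᵀ * C with hG
  have cost_sub : projCost R X - projCost C X = G.trace - (G * X).trace := by
    rw [projCost_eq_trace_sub_trace R hXt hX, projCost_eq_trace_sub_trace C hXt hX, hG,
      Matrix.sub_mul, trace_sub, trace_sub]
    ring
  have frobeniusSq_proj_le : frobeniusSq Xᵀ ≤ k := by
    rw [frobeniusSq_eq_trace, transpose_transpose, hXt, hX, trace_eq_rank_of_mul_self hX]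
    exact_mod_cast hXk
  have sq_trace_mul_proj_le : (G * X).trace ^ 2 ≤ k * frobeniusSq G := by
    rw [mul_comm (k : ℝ)]
    exact (sq_trace_mul_le G X).trans
      (mul_le_mul_of_nonneg_left frobeniusSq_proj_le (frobeniusSq_nonneg G))
  calc |projCost R X - projCost C X|
      ≤ |G.trace| + |(G * X).trace| := cost_sub ▸ abs_sub _ _
    _ ≤ ((2 * r)⁻¹ * G.trace ^ 2 + r / 2) + ((2 * r)⁻¹ * (G * X).trace ^ 2 + r / 2) :=
        add_le_add (abs_le_inv_two_mul_mul_sq_add hr _) (abs_le_inv_two_mul_mul_sq_add hr _)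
    _ ≤ ((2 * r)⁻¹ * G.trace ^ 2 + r / 2) + ((2 * r)⁻¹ * (k * frobeniusSq G) + r / 2) := by gcongr
    _ = (2 * r)⁻¹ * (G.trace ^ 2 + k * frobeniusSq G) + r := by ring

/-- An upper bound, uniform over the projections `X` of rank at most `k`, for the difference of
the projection costs of `R + E` and `C + D`. The Gram matrices of `R` and `C` are compared
directly and `E`, `D` are treated as noise; `r` and `s` are the free parameters of the two uses
of AM-GM. -/
noncomputable def projCostErrorBound (k : ℕ) (r s : ℝ) (R E : Matrix (Fin m) (Fin t) ℝ)
    (C D : Matrix (Fin m') (Fin t) ℝ) : ℝ :=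
  (2 * r)⁻¹ * ((Rᵀ * R - Cᵀ * C).trace ^ 2 + k * frobeniusSq (Rᵀ * R - Cᵀ * C)) + r +
    s * (frobeniusSq R + frobeniusSq C) + (1 + s⁻¹) * (frobeniusSq E + frobeniusSq D)

lemma abs_projCost_add_sub_projCost_add_le (R E : Matrix (Fin m) (Fin t) ℝ)
    (C D : Matrix (Fin m') (Fin t) ℝ) (hXt : Xᵀ = X) (hX : X * X = X) (hXk : X.rank ≤ k)
    {r s : ℝ} (hr : 0 < r) (hs : 0 < s) :
    |projCost (R + E) X - projCost (C + D) X| ≤ projCostErrorBound k r s R E C D := by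
  have rows := abs_projCost_add_sub_le R E hXt hX hs
  have cols := abs_projCost_add_sub_le C D hXt hX hs
  have gram := abs_projCost_sub_projCost_le R C hXt hX hXk hr
  unfold projCostErrorBound
  rw [abs_le] at *
  constructor <;> linarith

lemma projCostErrorBound_nonneg (k : ℕ) (R E : Matrix (Fin m) (Fin t) ℝ)
    (C D : Matrix (Fin m') (Fin t) ℝ) {r s : ℝ} (hr : 0 < r) (hs : 0 < s) :
    0 ≤ projCostErrorBound k r s R E C D :=
  (abs_nonneg _).trans (abs_projCost_add_sub_projCost_add_le (X := 0) R E C D transpose_zero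
    (Matrix.zero_mul 0) (by simp) hr hs)

end Projection

section Sketch

variable {n m t : ℕ} {q p : Fin n → ℝ}

lemma transpose_colSample_mul_apply (M : Matrix (Fin n) (Fin m) ℝ) (u : Fin t → Fin n)
    (l : Fin t) (b : Fin m) :
    ((colSample t p u)ᵀ * M) l b = (√(t * p (u l)))⁻¹ * M (u l) b := by
  simp [colSample, mul_apply]

lemma sum_sq_mul_colSample_row (hq : IsSamplingDist q) (M : Matrix (Fin m) (Fin n) ℝ)
    (v : Fin t → Fin n) (i : Fin m) :
    ∑ l, (M * colSample t q v) i l ^ 2 = hansenHurwitz q (fun j => M i j ^ 2) v := by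
  refine Finset.sum_congr rfl fun l _ => ?_
  have hweight : 0 ≤ t * q (v l) := mul_nonneg t.cast_nonneg (hq.pos _).le
  have entry : (M * colSample t q v) i l = M i (v l) * (√(t * q (v l)))⁻¹ := by
    simp [colSample, mul_apply]
  rw [entry, mul_pow, inv_pow, Real.sq_sqrt hweight, div_eq_mul_inv]

lemma gram_transpose_colSample_mul_apply (hp : IsSamplingDist p) (M : Matrix (Fin n) (Fin m) ℝ)
    (u : Fin t → Fin n) (a b : Fin m) :
    (((colSample t p u)ᵀ * M)ᵀ * ((colSample t p u)ᵀ * M)) a b =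
      hansenHurwitz p (fun i => M i a * M i b) u := by
  rw [mul_apply, hansenHurwitz]
  refine Finset.sum_congr rfl fun l _ => ?_
  have hweight : 0 ≤ t * p (u l) := mul_nonneg t.cast_nonneg (hp.pos _).le
  rw [transpose_apply, transpose_colSample_mul_apply, transpose_colSample_mul_apply,
    mul_mul_mul_comm, ← mul_inv, Real.mul_self_sqrt hweight, div_eq_inv_mul]

lemma frobeniusSq_transpose_colSample_mul (hp : IsSamplingDist p) (M : Matrix (Fin n) (Fin m) ℝ)
    (u : Fin t → Fin n) :
    frobeniusSq ((colSample t p u)ᵀ * M) = hansenHurwitz p (fun i => ∑ b, M i b ^ 2) u := by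
  simp only [frobeniusSq_eq_trace, trace, diag, gram_transpose_colSample_mul_apply hp, ← sq,
    hansenHurwitz, Finset.sum_div]
  exact Finset.sum_comm

lemma frobeniusSq_transpose_colSample_mul_of_subsingleton [Subsingleton (Fin n)]
    (hp : IsSamplingDist p) (M : Matrix (Fin n) (Fin t) ℝ) (u : Fin t → Fin n) :
    frobeniusSq ((colSample t p u)ᵀ * M) = frobeniusSq M := by
  rcases t.eq_zero_or_pos with rfl | ht
  · simp [frobeniusSq]
  · rw [frobeniusSq_transpose_colSample_mul hp, hansenHurwitz_of_subsingleton hp ht, frobeniusSq]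

lemma iidExp_frobeniusSq_mul_colSample (hq : IsSamplingDist q) (ht : 0 < t)
    (M : Matrix (Fin m) (Fin n) ℝ) :
    iidExp q (fun v : Fin t → Fin n => frobeniusSq (M * colSample t q v)) = frobeniusSq M := by
  simp only [frobeniusSq, sum_sq_mul_colSample_row hq, iidExp_sum]
  exact Finset.sum_congr rfl fun i _ => iidExp_hansenHurwitz hq ht _

lemma iidExp_frobeniusSq_transpose_colSample_mul (hp : IsSamplingDist p) (ht : 0 < t)
    (M : Matrix (Fin n) (Fin m) ℝ) :
    iidExp p (fun u : Fin t → Fin n => frobeniusSq ((colSample t p u)ᵀ * M)) = frobeniusSq M := by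
  simp only [frobeniusSq_transpose_colSample_mul hp]
  exact iidExp_hansenHurwitz hp ht _

/-- The error `(SᵀM)ᵀ(SᵀM) - MᵀM` made by estimating the Gram matrix of `M` from the rescaled row
sample `SᵀM`, where `S = colSample t p u`. -/
noncomputable def rowGramError (p : Fin n → ℝ) (M : Matrix (Fin n) (Fin m) ℝ)
    (u : Fin t → Fin n) : Matrix (Fin m) (Fin m) ℝ :=
  ((colSample t p u)ᵀ * M)ᵀ * ((colSample t p u)ᵀ * M) - Mᵀ * M

/-- The row-sampling second moment `∑ᵢ ‖Mᵢ‖⁴ / (t pᵢ)`, which bounds the variance of the sampled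
Gram matrix of `M`. -/
noncomputable def rowSecondMoment (t : ℕ) (p : Fin n → ℝ) (M : Matrix (Fin n) (Fin m) ℝ) : ℝ :=
  (∑ i, (∑ b, M i b ^ 2) ^ 2 / p i) / t

lemma iidExp_trace_rowGramError_sq_le (hp : IsSamplingDist p) (ht : 0 < t)
    (M : Matrix (Fin n) (Fin m) ℝ) :
    iidExp p (fun u : Fin t → Fin n => (rowGramError p M u).trace ^ 2) ≤
      rowSecondMoment t p M := by
  have trace_eq (u : Fin t → Fin n) : (rowGramError p M u).trace =
      hansenHurwitz p (fun i => ∑ b, M i b ^ 2) u - ∑ i, ∑ b, M i b ^ 2 := by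
    rw [rowGramError, trace_sub, ← frobeniusSq_eq_trace, ← frobeniusSq_eq_trace,
      frobeniusSq_transpose_colSample_mul hp, frobeniusSq]
  simp only [trace_eq]
  exact iidExp_hansenHurwitz_sub_sq_le hp ht _

lemma iidExp_frobeniusSq_rowGramError_le (hp : IsSamplingDist p) (ht : 0 < t)
    (M : Matrix (Fin n) (Fin m) ℝ) :
    iidExp p (fun u : Fin t → Fin n => frobeniusSq (rowGramError p M u)) ≤
      rowSecondMoment t p M := by
  have entry (u : Fin t → Fin n) (a b : Fin m) : rowGramError p M u a b =
      hansenHurwitz p (fun i => M i a * M i b) u - ∑ i, M i a * M i b := by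
    rw [rowGramError, Matrix.sub_apply, gram_transpose_colSample_mul_apply hp, mul_apply]
    rfl
  have row (i : Fin n) :
      (∑ b, M i b ^ 2) ^ 2 / p i = ∑ a, ∑ b, (M i a * M i b) ^ 2 / p i := by
    simp only [← Finset.sum_div, sq (∑ b, M i b ^ 2), Finset.sum_mul_sum, mul_pow]
  calc iidExp p (fun u : Fin t → Fin n => frobeniusSq (rowGramError p M u))
      = ∑ a, ∑ b, iidExp p (fun u : Fin t → Fin n =>
          (hansenHurwitz p (fun i => M i a * M i b) u - ∑ i, M i a * M i b) ^ 2) := by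
        simp only [frobeniusSq, entry, iidExp_sum]
    _ ≤ ∑ a, ∑ b, (∑ i, (M i a * M i b) ^ 2 / p i) / t :=
        Finset.sum_le_sum fun a _ => Finset.sum_le_sum fun b _ =>
          iidExp_hansenHurwitz_sub_sq_le hp ht _
    _ = (∑ i, ∑ a, ∑ b, (M i a * M i b) ^ 2 / p i) / t := by
        simp only [Finset.sum_div]
        exact (Finset.sum_congr rfl fun a _ => Finset.sum_comm).trans Finset.sum_comm
    _ = rowSecondMoment t p M := by simp only [rowSecondMoment, row]

end Sketch

section TwoSidedSketch

variable {n t k : ℕ} {q p : Fin n → ℝ} {A N : Matrix (Fin n) (Fin n) ℝ} {g : ℝ}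

lemma sum_sq_sq_div_le_of_posSemidef (hA : A.PosSemidef) (hq : IsSamplingDist q)
    (hgq : ∀ j, A j j ≤ g * q j) (i : Fin n) :
    ∑ j, (A i j ^ 2) ^ 2 / q j ≤ A i i * g * ∑ j, A i j ^ 2 := by
  rw [Finset.mul_sum]
  refine Finset.sum_le_sum fun j _ => ?_
  rw [div_le_iff₀ (hq.pos j)]
  calc (A i j ^ 2) ^ 2 = A i j ^ 2 * A i j ^ 2 := sq _
    _ ≤ A i i * A j j * A i j ^ 2 :=
        mul_le_mul_of_nonneg_right (sq_apply_le_of_posSemidef hA i j) (sq_nonneg _)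
    _ ≤ A i i * (g * q j) * A i j ^ 2 :=
        mul_le_mul_of_nonneg_right (mul_le_mul_of_nonneg_left (hgq j) hA.diag_nonneg) (sq_nonneg _)
    _ = A i i * g * A i j ^ 2 * q j := by ring

lemma iidExp_hansenHurwitz_row_sq_le (hA : A.PosSemidef) (hq : IsSamplingDist q) (ht : 0 < t)
    (hgq : ∀ j, A j j ≤ g * q j) (i : Fin n) :
    iidExp q (fun v : Fin t → Fin n => hansenHurwitz q (fun j => A i j ^ 2) v ^ 2) ≤
      A i i * (√(frobeniusSq A) + g / t) * ∑ j, A i j ^ 2 := by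
  have mean_sq : (∑ j, A i j ^ 2) ^ 2 ≤ A i i * √(frobeniusSq A) * ∑ j, A i j ^ 2 := by
    rw [sq]
    exact mul_le_mul_of_nonneg_right (sum_sq_row_le_of_posSemidef hA i)
      (Finset.sum_nonneg fun j _ => sq_nonneg _)
  calc iidExp q (fun v : Fin t → Fin n => hansenHurwitz q (fun j => A i j ^ 2) v ^ 2)
      ≤ (∑ j, A i j ^ 2) ^ 2 + (∑ j, (A i j ^ 2) ^ 2 / q j) / t :=
        iidExp_hansenHurwitz_sq_le hq ht fun j => A i j ^ 2
    _ ≤ A i i * √(frobeniusSq A) * (∑ j, A i j ^ 2) + (A i i * g * ∑ j, A i j ^ 2) / t :=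
        add_le_add mean_sq (div_le_div_of_nonneg_right
          (sum_sq_sq_div_le_of_posSemidef hA hq hgq i) t.cast_nonneg)
    _ = A i i * (√(frobeniusSq A) + g / t) * ∑ j, A i j ^ 2 := by ring

lemma iidExp_rowSecondMoment_mul_colSample_le (hA : A.PosSemidef) (hq : IsSamplingDist q)
    (hp : IsSamplingDist p) (ht : 0 < t) (hg : 0 ≤ g) (hgq : ∀ j, A j j ≤ g * q j)
    (hgp : ∀ i, A i i ≤ g * p i) :
    iidExp q (fun v : Fin t → Fin n => rowSecondMoment t p (A * colSample t q v)) ≤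
      (g / t * √(frobeniusSq A) + (g / t) ^ 2) * frobeniusSq A := by
  simp only [rowSecondMoment, sum_sq_mul_colSample_row hq, div_eq_inv_mul, iidExp_const_mul,
    iidExp_sum]
  calc (t : ℝ)⁻¹ * ∑ i, (p i)⁻¹ *
        iidExp q (fun v : Fin t → Fin n => hansenHurwitz q (fun j => A i j ^ 2) v ^ 2)
      ≤ (t : ℝ)⁻¹ * ∑ i, g * (√(frobeniusSq A) + g / t) * ∑ j, A i j ^ 2 := by
        refine mul_le_mul_of_nonneg_left (Finset.sum_le_sum fun i _ => ?_) (by positivity)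
        rw [inv_mul_le_iff₀ (hp.pos i)]
        calc iidExp q (fun v : Fin t → Fin n => hansenHurwitz q (fun j => A i j ^ 2) v ^ 2)
            ≤ A i i * (√(frobeniusSq A) + g / t) * ∑ j, A i j ^ 2 :=
              iidExp_hansenHurwitz_row_sq_le hA hq ht hgq i
          _ ≤ g * p i * (√(frobeniusSq A) + g / t) * ∑ j, A i j ^ 2 := by
              gcongr
              exact hgp i
          _ = p i * (g * (√(frobeniusSq A) + g / t) * ∑ j, A i j ^ 2) := by ring
    _ = ((t : ℝ)⁻¹ * g * √(frobeniusSq A) + ((t : ℝ)⁻¹ * g) ^ 2) * frobeniusSq A := by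
        rw [← Finset.mul_sum, ← frobeniusSq]
        ring

lemma one_add_mul_mul_add_sq_le {x y ε k : ℝ} (hx : 0 ≤ x) (hy : 0 ≤ y) (hε : 0 ≤ ε) (hε1 : ε ≤ 1)
    (hk : 1 ≤ k) (h : 4 * k * x ≤ ε ^ 2 * y) : (1 + k) * (x * y + x ^ 2) ≤ ε ^ 2 * y ^ 2 := by
  have hxy : x ≤ y := calc
    x ≤ 4 * k * x := le_mul_of_one_le_left hx (by linarith)
    _ ≤ ε ^ 2 * y := h
    _ ≤ y := mul_le_of_le_one_left hy (pow_le_one₀ hε hε1)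
  calc (1 + k) * (x * y + x ^ 2) ≤ (k + k) * (x * y + x * y) := by
        rw [sq]
        gcongr
    _ = 4 * k * x * y := by ring
    _ ≤ ε ^ 2 * y * y := by gcongr
    _ = ε ^ 2 * y ^ 2 := by ring

lemma iidExp_rowGramError_mul_colSample_le (hA : A.PosSemidef) (hF : 0 < frobeniusSq A)
    (hq : IsSamplingDist q) (hp : IsSamplingDist p) (ht : 0 < t) (hg : 0 ≤ g)
    (hgq : ∀ j, A j j ≤ g * q j) (hgp : ∀ i, A i i ≤ g * p i) {ε : ℝ} (hε : 0 ≤ ε) (hε1 : ε ≤ 1)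
    (hk : 1 ≤ k) (hgt : 4 * k * g ≤ ε ^ 2 * t * √(frobeniusSq A)) :
    iidExp q (fun v : Fin t → Fin n => iidExp p (fun u : Fin t → Fin n =>
      (rowGramError p (A * colSample t q v) u).trace ^ 2 +
        k * frobeniusSq (rowGramError p (A * colSample t q v) u))) ≤
      (ε * frobeniusSq A) ^ 2 := by
  set F := frobeniusSq A
  have inner (v : Fin t → Fin n) : iidExp p (fun u : Fin t → Fin n =>
      (rowGramError p (A * colSample t q v) u).trace ^ 2 +
        k * frobeniusSq (rowGramError p (A * colSample t q v) u)) ≤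
      (1 + k) * rowSecondMoment t p (A * colSample t q v) := by
    rw [iidExp_add, iidExp_const_mul, add_mul, one_mul]
    gcongr
    · exact iidExp_trace_rowGramError_sq_le hp ht _
    · exact iidExp_frobeniusSq_rowGramError_le hp ht _
  have sample_size : 4 * k * (g / t) ≤ ε ^ 2 * √F := by
    rw [← mul_div_assoc, div_le_iff₀ (by positivity)]
    linarith
  have hk' : (1 : ℝ) ≤ k := by exact_mod_cast hk
  calc _ ≤ (1 + k) * iidExp q (fun v : Fin t → Fin n =>
          rowSecondMoment t p (A * colSample t q v)) := by
        rw [← iidExp_const_mul]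
        exact iidExp_mono (fun j => (hq.pos j).le) inner
    _ ≤ (1 + k) * ((g / t * √F + (g / t) ^ 2) * F) := by
        gcongr
        exact iidExp_rowSecondMoment_mul_colSample_le hA hq hp ht hg hgq hgp
    _ = (1 + k) * (g / t * √F + (g / t) ^ 2) * F := by ring
    _ ≤ ε ^ 2 * √F ^ 2 * F := by
        refine mul_le_mul_of_nonneg_right ?_ hF.le
        exact one_add_mul_mul_add_sq_le (by positivity) (Real.sqrt_nonneg F) hε hε1 hk' sample_size
    _ = (ε * F) ^ 2 := by
        rw [Real.sq_sqrt hF.le]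
        ring

lemma iidExp_projCostErrorBound_le (hA : A.PosSemidef) (hF : 0 < frobeniusSq A)
    (hq : IsSamplingDist q) (hp : IsSamplingDist p) (ht : 0 < t) (hg : 0 ≤ g)
    (hgq : ∀ j, A j j ≤ g * q j) (hgp : ∀ i, A i i ≤ g * p i) {ε η : ℝ} (hε : 0 < ε)
    (hε1 : ε ≤ 1) (hη : 0 < η) (hη1 : η ≤ 1) (hN : frobeniusSq N ≤ η * frobeniusSq A)
    (hk : 1 ≤ k) (hgt : 4 * k * g ≤ ε ^ 2 * t * √(frobeniusSq A)) :
    iidExp q (fun v : Fin t → Fin n => iidExp p (fun u : Fin t → Fin n =>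
      projCostErrorBound k (ε * frobeniusSq A) √η
        ((colSample t p u)ᵀ * (A * colSample t q v)) ((colSample t p u)ᵀ * (N * colSample t q v))
        (A * colSample t q v) (N * colSample t q v))) ≤
      6 * (ε + √η) * frobeniusSq A := by
  set F := frobeniusSq A with hF_def
  have gram := iidExp_rowGramError_mul_colSample_le hA hF hq hp ht hg hgq hgp hε.le hε1 hk hgt
  have noise : (1 + (√η)⁻¹) * frobeniusSq N ≤ 2 * √η * F := calc
    (1 + (√η)⁻¹) * frobeniusSq N ≤ (1 + (√η)⁻¹) * (√η ^ 2 * F) := by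
      rw [Real.sq_sqrt hη.le]
      gcongr
    _ = (√η + 1) * (√η * F) := by field_simp
    _ ≤ (1 + 1) * (√η * F) := by
      gcongr
      exact Real.sqrt_le_one.2 hη1
    _ = 2 * √η * F := by ring
  simp only [rowGramError] at gram
  simp only [projCostErrorBound, iidExp_add, iidExp_const_mul, iidExp_const hp.sum_eq_one,
    iidExp_const hq.sum_eq_one, iidExp_frobeniusSq_transpose_colSample_mul hp ht,
    iidExp_frobeniusSq_mul_colSample hq ht, ← hF_def] at gram ⊢
  have hr : 0 ≤ 2 * (ε * F) := by positivity
  have gram_scaled := mul_le_mul_of_nonneg_left gram (inv_nonneg.2 hr)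
  have gram_scaled_eq : (2 * (ε * F))⁻¹ * (ε * F) ^ 2 = ε * F / 2 := by field_simp
  linarith

/-- The event that the row sample `R` of the column sketch `C = B S` preserves all projection costs
of rank at most `k` up to `δ`. A sample point is the pair of drawn columns and drawn rows. -/
def rowPCPEvent (t : ℕ) (q p : Fin n → ℝ) (B : Matrix (Fin n) (Fin n) ℝ) (k : ℕ) (δ : ℝ) :
    Set ((Fin t → Fin n) × (Fin t → Fin n)) :=
  {w | ∀ X : Matrix (Fin t) (Fin t) ℝ, Xᵀ = X → X * X = X → X.rank ≤ k →
    |projCost ((colSample t p w.2)ᵀ * (B * colSample t q w.1)) X -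
      projCost (B * colSample t q w.1) X| ≤ δ}

lemma trace_le_of_diag_le (hq : IsSamplingDist q) (hgq : ∀ j, A j j ≤ g * q j) : A.trace ≤ g := calc
  A.trace ≤ ∑ j, g * q j := Finset.sum_le_sum fun j _ => hgq j
  _ = g := by rw [← Finset.mul_sum, hq.sum_eq_one, mul_one]

theorem two_thirds_le_iidProb2_rowPCPEvent (hA : A.PosSemidef) (hF : 0 < frobeniusSq A)
    (hq : IsSamplingDist q) (hp : IsSamplingDist p) (hgq : ∀ j, A j j ≤ g * q j)
    (hgp : ∀ i, A i i ≤ g * p i) {ε η : ℝ} (hε : 0 < ε) (hε1 : ε ≤ 1) (hη : 0 < η) (hη1 : η ≤ 1)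
    (hN : frobeniusSq N ≤ η * frobeniusSq A) (hk : 1 ≤ k)
    (hgt : 4 * k * g ≤ ε ^ 2 * t * √(frobeniusSq A)) :
    2 / 3 ≤ iidProb2 t q p (rowPCPEvent t q p (A + N) k (18 * (ε + √η) * frobeniusSq A)) := by
  set F := frobeniusSq A
  have hg : 0 < g := (trace_pos_of_posSemidef hA hF).trans_le (trace_le_of_diag_le hq hgq)
  have ht : 0 < t := by
    refine Nat.pos_of_ne_zero fun h => ?_
    have : 0 < 4 * k * g := by positivity
    simp only [h, CharP.cast_eq_zero, mul_zero, zero_mul] at hgt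
    linarith
  have hr : 0 < ε * F := by positivity
  have hs : 0 < √η := by positivity
  have prob_eq : 1 - 6 * (ε + √η) * F / (18 * (ε + √η) * F) = 2 / 3 := by
    field_simp
    norm_num
  rw [← prob_eq]
  refine one_sub_div_le_iidProb2 hq hp (fun _ _ => projCostErrorBound_nonneg k _ _ _ _ hr hs)
    (by positivity)
    (iidExp_projCostErrorBound_le hA hF hq hp ht hg.le hgq hgp hε hε1 hη hη1 hN hk hgt) ?_
  intro v u hvu X hXt hX hXk
  refine le_trans ?_ hvu
  simp only [Matrix.add_mul, Matrix.mul_add]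
  exact abs_projCost_add_sub_projCost_add_le _ _ _ _ hXt hX hXk hr hs

lemma one_le_iidProb2_rowPCPEvent_of_subsingleton [Subsingleton (Fin n)] (hq : IsSamplingDist q)
    (hp : IsSamplingDist p) (B : Matrix (Fin n) (Fin n) ℝ) {δ : ℝ} (hδ : 0 ≤ δ) :
    1 ≤ iidProb2 t q p (rowPCPEvent t q p B k δ) := by
  have exact_cost (v u : Fin t → Fin n) (X : Matrix (Fin t) (Fin t) ℝ) :
      projCost ((colSample t p u)ᵀ * (B * colSample t q v)) X =
        projCost (B * colSample t q v) X := by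
    rw [projCost, projCost, Matrix.mul_assoc, ← Matrix.mul_sub,
      frobeniusSq_transpose_colSample_mul_of_subsingleton hp]
  have mean_zero : iidExp q (fun _ : Fin t → Fin n => iidExp p fun _ : Fin t → Fin n => 0) ≤ 0 := by
    simp only [iidExp_const hp.sum_eq_one, iidExp_const hq.sum_eq_one, le_refl]
  simpa using one_sub_div_le_iidProb2 hq hp (fun _ _ => le_rfl) one_pos mean_zero
    (E := rowPCPEvent t q p B k δ) fun v u _ X _ _ _ => by simpa [exact_cost] using hδ

end TwoSidedSketch

section DiagonalSampling

variable {n : ℕ} {A N B : Matrix (Fin n) (Fin n) ℝ}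

/-- The distribution `pⱼ = Bⱼⱼ / tr B` of diagonal sampling. -/
noncomputable def diagWeights (B : Matrix (Fin n) (Fin n) ℝ) (j : Fin n) : ℝ :=
  B j j / B.trace

lemma trace_pos_of_diag_pos [NeZero n] (hB : ∀ j, 0 < B j j) : 0 < B.trace :=
  Finset.sum_pos (fun j _ => hB j) Finset.univ_nonempty

lemma isSamplingDist_diagWeights [NeZero n] (hB : ∀ j, 0 < B j j) :
    IsSamplingDist (diagWeights B) where
  pos j := div_pos (hB j) (trace_pos_of_diag_pos hB)
  sum_eq_one := by
    simp only [diagWeights, ← Finset.sum_div]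
    exact div_self (trace_pos_of_diag_pos hB).ne'

lemma apply_le_mul_diagWeights [NeZero n] (hB : ∀ j, 0 < B j j) {φ : ℝ} {j : Fin n}
    (hφ : A j j / B j j ≤ φ) : A j j ≤ φ * B.trace * diagWeights B j := by
  rw [diagWeights, mul_assoc, mul_div_cancel₀ _ (trace_pos_of_diag_pos hB).ne']
  exact (div_le_iff₀ (hB j)).1 hφ

lemma nonneg_of_isGreatest_diag_div (hA : A.PosSemidef) (hB : ∀ j, 0 < B j j) {φ : ℝ}
    (hφ : IsGreatest (Set.range fun j => A j j / B j j) φ) : 0 ≤ φ := by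
  obtain ⟨j, rfl⟩ := hφ.1
  exact div_nonneg hA.diag_nonneg (hB j).le

lemma trace_add_le_two_mul_sqrt_mul_sqrt (hNA : frobeniusSq N ≤ frobeniusSq A) :
    (A + N).trace ≤ 2 * √n * √(frobeniusSq A) := by
  refine le_of_sq_le_sq ?_ (by positivity)
  calc (A + N).trace ^ 2 ≤ n * frobeniusSq (A + N) := sq_trace_le _
    _ ≤ n * (4 * frobeniusSq A) := by
        gcongr
        exact frobeniusSq_add_le_four_mul hNA
    _ = (2 * √n * √(frobeniusSq A)) ^ 2 := by
        rw [mul_pow, mul_pow, Real.sq_sqrt n.cast_nonneg, Real.sq_sqrt (frobeniusSq_nonneg A)]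
        ring

lemma frobeniusSq_pos_of_diag_add_pos [NeZero n] (hNA : frobeniusSq N ≤ frobeniusSq A)
    (hdiag : ∀ j, 0 < (A + N) j j) : 0 < frobeniusSq A := by
  refine (frobeniusSq_nonneg A).lt_of_ne fun h => ?_
  have := trace_add_le_two_mul_sqrt_mul_sqrt hNA
  rw [← h, Real.sqrt_zero, mul_zero] at this
  exact this.not_gt (trace_pos_of_diag_pos hdiag)

end DiagonalSampling

lemma sqrt_le_two_mul_sqrt_sub_one {x : ℝ} (hx : 2 ≤ x) : √x ≤ 2 * √(x - 1) := by
  rw [Real.sqrt_le_left (by positivity), mul_pow, Real.sq_sqrt (by linarith)]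
  linarith

theorem robust_row_pcp_general {n k t : ℕ} {A N : Matrix (Fin n) (Fin n) ℝ} {η ε φ : ℝ}
    (hA : A.PosSemidef) (hη : 0 < η) (hη1 : η ≤ 1) (hN : frobeniusSq N ≤ η * frobeniusSq A)
    (hdiag : ∀ j, 0 < (A + N) j j) (hφ : IsGreatest (Set.range fun j => A j j / (A + N) j j) φ)
    (hε : 0 < ε) (hε1 : ε ≤ 1) (hk : 1 ≤ k) (ht : 16 * φ * √(n - 1) * k / ε ^ 2 ≤ t) :
    2 / 3 ≤ iidProb2 t (diagWeights (A + N)) (diagWeights (A + N))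
      (rowPCPEvent t (diagWeights (A + N)) (diagWeights (A + N)) (A + N) k
        (18 * (ε + √η) * frobeniusSq A)) := by
  obtain ⟨j₀, -⟩ := hφ.1
  have : NeZero n := ⟨j₀.pos.ne'⟩
  have hq := isSamplingDist_diagWeights hdiag
  have hF0 := frobeniusSq_nonneg A
  rcases (NeZero.one_le (n := n)).eq_or_lt with rfl | hn
  · have := one_le_iidProb2_rowPCPEvent_of_subsingleton (t := t) (k := k) hq hq (A + N)
      (δ := 18 * (ε + √η) * frobeniusSq A) (by positivity)
    linarith
  have hNA : frobeniusSq N ≤ frobeniusSq A := hN.trans (mul_le_of_le_one_left hF0 hη1)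
  have hφ0 : 0 ≤ φ := nonneg_of_isGreatest_diag_div hA hdiag hφ
  have hdom (j : Fin n) := apply_le_mul_diagWeights hdiag (hφ.2 ⟨j, rfl⟩)
  refine two_thirds_le_iidProb2_rowPCPEvent hA (frobeniusSq_pos_of_diag_add_pos hNA hdiag) hq hq
    hdom hdom hε hε1 hη hη1 hN hk ?_
  rw [div_le_iff₀ (by positivity)] at ht
  calc 4 * k * (φ * (A + N).trace) ≤ 4 * k * (φ * (2 * √n * √(frobeniusSq A))) := by
        gcongr
        exact trace_add_le_two_mul_sqrt_mul_sqrt hNA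
    _ ≤ 4 * k * (φ * (2 * (2 * √(n - 1)) * √(frobeniusSq A))) := by
        gcongr
        exact sqrt_le_two_mul_sqrt_sub_one (by exact_mod_cast hn)
    _ = 16 * φ * √(n - 1) * k * √(frobeniusSq A) := by ring
    _ ≤ t * ε ^ 2 * √(frobeniusSq A) := by gcongr
    _ = ε ^ 2 * t * √(frobeniusSq A) := by ring

lemma sqrt_sub_one_mul_le {n k : ℕ} (hn : 1 ≤ n) (hk : 1 ≤ k) :
    √(n - 1) * k ≤ 4 * √n * k ^ 2 * Real.log n ^ 2 := by
  rcases hn.eq_or_lt with rfl | hn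
  · simp
  have one_le_log : 1 ≤ 4 * Real.log n ^ 2 := by
    have log_two_le : Real.log 2 ≤ Real.log n := Real.log_le_log two_pos (by exact_mod_cast hn)
    nlinarith [Real.log_two_gt_d9]
  have hk' : (1 : ℝ) ≤ k := by exact_mod_cast hk
  calc √(n - 1) * k ≤ √n * k ^ 2 := by
        gcongr
        · linarith
        · exact le_self_pow₀ hk' two_ne_zero
    _ ≤ √n * k ^ 2 * (4 * Real.log n ^ 2) := le_mul_of_one_le_right (by positivity) one_le_log
    _ = 4 * √n * k ^ 2 * Real.log n ^ 2 := by ring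

lemma sampleSize_le_of_isGreatest {n k : ℕ} {A B : Matrix (Fin n) (Fin n) ℝ} {φ : ℝ}
    (hA : A.PosSemidef) (hB : ∀ j, 0 < B j j)
    (hφ : IsGreatest (Set.range fun j => A j j / B j j) φ) (hk : 1 ≤ k) (ε : ℝ) :
    16 * φ * √(n - 1) * k / ε ^ 2 ≤ 64 * φ * √n * k ^ 2 * Real.log n ^ 2 / ε ^ 2 := by
  obtain ⟨j₀, -⟩ := hφ.1
  have hφ0 := nonneg_of_isGreatest_diag_div hA hB hφ
  have := mul_le_mul_of_nonneg_left (sqrt_sub_one_mul_le j₀.pos hk) hφ0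
  gcongr ?_ / _
  linarith

/-- Robust row projection-cost preservation: the row sample R of the column sketch C
preserves, for all rank-k orthogonal projections X, the row projection cost of C up to
additive error c₁(ε+√η)‖A‖_F², with probability at least 2/3. -/
theorem robust_row_pcp :
    ∃ c₀ c₁ : ℝ, 0 < c₀ ∧ 0 < c₁ ∧
      ∀ (n : ℕ) (A N : Matrix (Fin n) (Fin n) ℝ) (η ε φ : ℝ) (k t : ℕ),
        A.PosSemidef →
        0 < η → η ≤ 1 →
        frobeniusSq N ≤ η * frobeniusSq A →
        (∀ j, (∑ i, (N i j)^2) ≤ ∑ i, (A i j)^2) →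
        (∀ j, 0 < (A + N) j j) →
        IsGreatest (Set.range fun j => A j j / (A + N) j j) φ →
        0 < ε → ε < 1 → 1 ≤ k →
        c₀ * φ * Real.sqrt n * (k : ℝ)^2 * (Real.log n)^2 / ε^2 ≤ (t : ℝ) →
        (2/3 : ℝ) ≤
          iidProb2 t (fun j => (A + N) j j / (A + N).trace)
              (fun j => (A + N) j j / (A + N).trace)
            {w : (Fin t → Fin n) × (Fin t → Fin n) |
              ∀ X : Matrix (Fin t) (Fin t) ℝ, Xᵀ = X → X * X = X → X.rank ≤ k →
                |frobeniusSq
                    ((colSample t (fun j => (A + N) j j / (A + N).trace) w.2)ᵀ *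
                        ((A + N) * colSample t (fun j => (A + N) j j / (A + N).trace) w.1) -
                      ((colSample t (fun j => (A + N) j j / (A + N).trace) w.2)ᵀ *
                        ((A + N) * colSample t (fun j => (A + N) j j / (A + N).trace) w.1)) * X) -
                  frobeniusSq
                    ((A + N) * colSample t (fun j => (A + N) j j / (A + N).trace) w.1 -
                      ((A + N) * colSample t (fun j => (A + N) j j / (A + N).trace) w.1) * X)| ≤
                c₁ * (ε + Real.sqrt η) * frobeniusSq A} := by
  refine ⟨64, 18, by norm_num, by norm_num, ?_⟩
  intro n A N η ε φ k t hA hη hη1 hN _ hdiag hφ hε hε1 hk ht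
  exact robust_row_pcp_general hA hη hη1 hN hdiag hφ hε hε1.le hk
    ((sampleSize_le_of_isGreatest hA hdiag hφ hk ε).trans ht)
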